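/- Let I ⊆ ℝ be a closed bounded interval and f : I → I a continuous map admitting no 2-cycle. Then f is universal for the first Sharkovsky class if and only if there exist a point p ∈ I with f(p) = p and a sequence (a_n)_{n≥0} in I converging to p such that: a_n > p when n is even, a_n < p when n is odd, f(a_n) > p when n ≡ 0 or 1 (mod 4), and f(a_n) < p when n ≡ 2 or 3 (mod 4). -/

import Mathlib

/-- `f`, viewed as an interval map on `[a,b]`, is universal for the first Sharkovsky
class: every orbit pattern of any interval map with no 2-cycle occurs as an orbit
pattern of `f`. -/
def IsUniversalF1 (a b : ℝ) (f : ℝ → ℝ) : Prop :=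
  ∀ c d : ℝ, c ≤ d → ∀ g : ℝ → ℝ,
    ContinuousOn g (Set.Icc c d) →
    Set.MapsTo g (Set.Icc c d) (Set.Icc c d) →
    (¬ ∃ x ∈ Set.Icc c d, ∃ y ∈ Set.Icc c d, x ≠ y ∧ g x = y ∧ g y = x) →
    ∀ p ∈ Set.Icc c d, ∃ q ∈ Set.Icc a b,
      ∀ m n : ℕ, (g^[m] p < g^[n] p ↔ f^[m] q < f^[n] q)

/-!
Without 2-cycles, a point moved to the right by `g` stays to the left of all its later iterates,
and symmetrically, so an order pattern in the first Sharkovsky class is determined by the signs of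
its steps. Conversely, if `f` takes values on both sides of a fixed point `p` on either side of and
arbitrarily near `p`, then any sequence of signs is realized: on the prescribed side of `p`, choose
compact intervals shrinking to `p` so fast that the image of each one is a neighbourhood of `p`
containing all the following ones, and take a point whose orbit visits them in turn.

For the necessity of the oscillation, a universal map must realize the orbit of `1` under
`x ↦ x / 2 * cos (π * log₂ |x|)`, which spirals towards the fixed point `0` with signs `+ + - -`.
A realization of that pattern has to converge to a fixed point, with the same signs.
-/

open Filter Function Set Topology

/-! ### Order patterns with prescribed steps -/

section TailOrder

variable {α β γ : Type*} [LinearOrder α] [LinearOrder β] [LinearOrder γ]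

/-- Each term `x m` compares with *all* later terms as prescribed by `o m`. Orbits without 2-cycles
have this property, with `o m` the direction of the `m`-th step. -/
def HasTailOrder (x : ℕ → α) (o : ℕ → Ordering) : Prop :=
  ∀ ⦃m n⦄, m < n → cmp (x m) (x n) = o m

theorem HasTailOrder.lt_iff_lt {x : ℕ → α} {y : ℕ → β} {o : ℕ → Ordering}
    (hx : HasTailOrder x o) (hy : HasTailOrder y o) (m n : ℕ) : x m < x n ↔ y m < y n := by
  apply lt_iff_lt_of_cmp_eq_cmp
  rcases lt_trichotomy m n with hmn | rfl | hnm
  · rw [hx hmn, hy hmn]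
  · simp only [cmp_self_eq_eq]
  · rw [cmp_eq_cmp_symm, hx hnm, hy hnm]

theorem HasTailOrder.congr {x : ℕ → α} {y : ℕ → β} {o : ℕ → Ordering}
    (hx : HasTailOrder x o) (hxy : ∀ m n, x m < x n ↔ y m < y n) : HasTailOrder y o := by
  intro m n hmn
  rw [← hx hmn]
  simp only [cmp, cmpUsing, hxy]

end TailOrder

/-! ### Orbits in the first Sharkovsky class -/

section FirstSharkovskyClass

theorem exists_isGreatest_fixedPoints {α : Type*} [ConditionallyCompleteLinearOrder α]
    [TopologicalSpace α] [OrderTopology α] {c d : α} {g : α → α}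
    (hg : ContinuousOn g (Icc c d)) (hne : (Icc c d ∩ fixedPoints g).Nonempty) :
    ∃ z, IsGreatest (Icc c d ∩ fixedPoints g) z :=
  (isCompact_Icc.of_isClosed_subset
    ((hg.prodMk continuousOn_id).preimage_isClosed_of_isClosed isClosed_Icc isClosed_diagonal)
    inter_subset_left).exists_isGreatest hne

/-- The first Sharkovsky class `𝓕₁`: `g` is a continuous self-map of `[c, d]` without 2-cycles. -/
structure MemF1 {α : Type*} [Preorder α] [TopologicalSpace α] (c d : α) (g : α → α) : Prop where
  continuousOn : ContinuousOn g (Icc c d)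
  mapsTo : MapsTo g (Icc c d) (Icc c d)
  no_two_cycle : ¬ ∃ x ∈ Icc c d, ∃ y ∈ Icc c d, x ≠ y ∧ g x = y ∧ g y = x

namespace MemF1

section Preorder

variable {α : Type*} [Preorder α] [TopologicalSpace α] {c d x : α} {g : α → α}

theorem dual (h : MemF1 c d g) :
    MemF1 (OrderDual.toDual d) (OrderDual.toDual c)
      (OrderDual.toDual ∘ g ∘ OrderDual.ofDual) where
  continuousOn := by
    rw [Icc_toDual]
    exact continuous_toDual.comp_continuousOn
      (h.continuousOn.comp continuous_ofDual.continuousOn (mapsTo_preimage _ _))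
  mapsTo _ hx := (h.mapsTo hx.symm).symm
  no_two_cycle := fun ⟨x, hx, y, hy, hne, hxy, hyx⟩ =>
    h.no_two_cycle ⟨OrderDual.ofDual x, hx.symm, OrderDual.ofDual y, hy.symm, hne, hxy, hyx⟩

theorem isFixedPt_of_apply_apply_eq (h : MemF1 c d g) (hx : x ∈ Icc c d) (hgg : g (g x) = x) :
    IsFixedPt g x := by
  by_contra hne
  exact h.no_two_cycle ⟨x, hx, g x, h.mapsTo hx, Ne.symm hne, rfl, hgg⟩

end Preorder

variable {α : Type*} [ConditionallyCompleteLinearOrder α] [TopologicalSpace α] [OrderTopology α]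
  [DenselyOrdered α] {c d x y : α} {g : α → α}

theorem exists_isFixedPt_mem_Icc (h : MemF1 c d g) (hx : x ∈ Icc c d) (hy : y ∈ Icc c d)
    (hxy : x ≤ y) (hgx : x ≤ g (g x)) (hgy : g (g y) ≤ y) : ∃ z ∈ Icc x y, IsFixedPt g z := by
  have hsub : Icc x y ⊆ Icc c d := Icc_subset_Icc hx.1 hy.2
  obtain ⟨z, hz, hggz⟩ := exists_mem_Icc_isFixedPt
    ((h.continuousOn.comp h.continuousOn h.mapsTo).mono hsub) hxy hgx hgy
  exact ⟨z, hz, h.isFixedPt_of_apply_apply_eq (hsub hz) hggz⟩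

theorem lt_apply_apply (h : MemF1 c d g) (hx : x ∈ Icc c d) (hxg : x < g x) : x < g (g x) := by
  by_contra! hgg
  have hc : c ∈ Icc c d := left_mem_Icc.2 (hx.1.trans hx.2)
  have hcx : Icc c x ⊆ Icc c d := Icc_subset_Icc_right hx.2
  obtain ⟨z, ⟨hz, hgz : g z = z⟩, hz_max⟩ :=
    exists_isGreatest_fixedPoints (h.continuousOn.mono hcx)
      (h.exists_isFixedPt_mem_Icc hc hx hx.1 (h.mapsTo (h.mapsTo hc)).1 hgg)
  -- `g` maps `t` to `x` and `g x` is on the right of `t`, so there is a fixed point beyond `t`.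
  obtain ⟨t, ht, hgt⟩ : x ∈ g '' Icc z x :=
    intermediate_value_Icc hz.2 (h.continuousOn.mono (Icc_subset_Icc hz.1 hx.2))
      ⟨hgz.trans_le hz.2, hxg.le⟩
  have ht' : t ∈ Icc c d := hcx ⟨hz.1.trans ht.1, ht.2⟩
  obtain ⟨s, hs, hgs⟩ := h.exists_isFixedPt_mem_Icc ht' hx ht.2
    (by rw [hgt]; exact ht.2.trans hxg.le) hgg
  have hsz : s ≤ z := hz_max ⟨⟨ht'.1.trans hs.1, hs.2⟩, hgs⟩
  have htz : t = z := ((hs.1.trans hsz).antisymm ht.1)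
  have hxz : x = z := by rw [← hgt, htz, hgz]
  exact hxg.ne' (by rw [hxz, hgz])

theorem apply_lt_of_apply_le (h : MemF1 c d g) (hx : x ∈ Icc c d) (hy : y ∈ Icc c d) (hxy : x < y)
    (hgy : g y ≤ x) {t : α} (ht : t ∈ Icc x y) : g t < y := by
  by_contra! hgt
  obtain ⟨s, hs, hgs⟩ : y ∈ g '' Icc t y :=
    intermediate_value_Icc' ht.2 (h.continuousOn.mono (Icc_subset_Icc (hx.1.trans ht.1) hy.2))
      ⟨hgy.trans hxy.le, hgt⟩
  have hsy : s < y := hs.2.lt_of_ne (by rintro rfl; exact hxy.not_ge (hgs.symm.trans_le hgy))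
  have hs' : s ∈ Icc c d := ⟨hx.1.trans (ht.1.trans hs.1), hs.2.trans hy.2⟩
  have hsgg : s < g (g s) := h.lt_apply_apply hs' (hsy.trans_eq hgs.symm)
  rw [hgs] at hsgg
  exact (hsgg.trans_le hgy).not_ge (ht.1.trans hs.1)

theorem lt_iterate (h : MemF1 c d g) (hx : x ∈ Icc c d) (hxg : x < g x) (n : ℕ) :
    x < g^[n + 1] x := by
  induction n using Nat.strong_induction_on with
  | _ n ih =>
  rcases n with _ | n
  · exact hxg
  by_contra! hreturn
  rw [iterate_succ_apply'] at hreturn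
  have hmem : ∀ k ≤ n + 1, g^[k] x ∈ Ico x (g^[n + 1] x) := by
    intro k
    induction k with
    | zero => exact fun _ => ⟨le_rfl, ih n n.lt_succ_self⟩
    | succ k ihk =>
      intro hk
      refine ⟨(ih k (by omega)).le, ?_⟩
      rw [iterate_succ_apply' g k]
      exact h.apply_lt_of_apply_le hx (h.mapsTo.iterate _ hx) (ih n n.lt_succ_self) hreturn
        (Ico_subset_Icc_self (ihk (by omega)))
  exact (hmem (n + 1) le_rfl).2.false

theorem iterate_lt (h : MemF1 c d g) (hx : x ∈ Icc c d) (hgx : g x < x) (n : ℕ) :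
    g^[n + 1] x < x :=
  h.dual.lt_iterate (x := OrderDual.toDual x) hx.symm hgx n

theorem cmp_iterate (h : MemF1 c d g) (hx : x ∈ Icc c d) (n : ℕ) :
    cmp x (g^[n + 1] x) = cmp x (g x) := by
  rcases lt_trichotomy x (g x) with hlt | heq | hgt
  · rw [hlt.cmp_eq_lt, (h.lt_iterate hx hlt n).cmp_eq_lt]
  · rw [iterate_fixed heq.symm, ← heq]
  · rw [hgt.cmp_eq_gt, (h.iterate_lt hx hgt n).cmp_eq_gt]

theorem hasTailOrder_iterate (h : MemF1 c d g) (hx : x ∈ Icc c d) :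
    HasTailOrder (fun n => g^[n] x) (fun n => cmp (g^[n] x) (g^[n + 1] x)) := by
  intro m n hmn
  obtain ⟨k, rfl⟩ := Nat.exists_eq_add_of_lt hmn
  have hiter : g^[m + k + 1] x = g^[k + 1] (g^[m] x) := by
    rw [← iterate_add_apply, add_comm (k + 1) m, add_assoc]
  simp only [hiter, iterate_succ_apply' g m]
  exact h.cmp_iterate (h.mapsTo.iterate m hx) k

end MemF1

end FirstSharkovskyClass

/-! ### Realizing prescribed steps near an oscillation -/

section Itinerary

variable {X : Type*} {f : X → X}

theorem exists_forall_lt_iterate_mem {K : ℕ → Set X} (hne : ∀ n, (K n).Nonempty)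
    (hcover : ∀ n, SurjOn f (K n) (K (n + 1))) (n : ℕ) : ∃ q, ∀ k < n + 1, f^[k] q ∈ K k := by
  induction n generalizing K with
  | zero =>
    obtain ⟨q, hq⟩ := hne 0
    exact ⟨q, by simpa using hq⟩
  | succ n ih =>
    obtain ⟨y, hy⟩ := ih (fun n => hne (n + 1)) (fun n => hcover (n + 1))
    obtain ⟨q, hq, rfl⟩ := hcover 0 (hy 0 n.succ_pos)
    exact ⟨q, Nat.forall_lt_succ_left.2 ⟨hq, hy⟩⟩

theorem isClosed_setOf_forall_lt_iterate_mem [TopologicalSpace X] {K : ℕ → Set X}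
    (hK : ∀ n, IsClosed (K n)) (hf : ∀ n, ContinuousOn f (K n)) (n : ℕ) :
    IsClosed {q | ∀ k < n, f^[k] q ∈ K k} := by
  induction n generalizing K with
  | zero => simp
  | succ n ih =>
    simp only [Nat.forall_lt_succ_left, iterate_zero_apply, iterate_succ_apply]
    exact (hf 0).preimage_isClosed_of_isClosed (hK 0)
      (ih (fun n => hK (n + 1)) (fun n => hf (n + 1)))

theorem exists_forall_iterate_mem [TopologicalSpace X] {K : ℕ → Set X} (hK₀ : IsCompact (K 0))
    (hK : ∀ n, IsClosed (K n)) (hne : ∀ n, (K n).Nonempty) (hf : ∀ n, ContinuousOn f (K n))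
    (hcover : ∀ n, SurjOn f (K n) (K (n + 1))) : ∃ q, ∀ n, f^[n] q ∈ K n := by
  obtain ⟨q, hq⟩ := IsCompact.nonempty_iInter_of_sequence_nonempty_isCompact_isClosed
    (fun n => {q | ∀ k < n + 1, f^[k] q ∈ K k})
    (fun n q hq k hk => hq k (hk.trans n.succ.lt_succ_self))
    (exists_forall_lt_iterate_mem hne hcover) (by simpa using hK₀)
    (fun n => isClosed_setOf_forall_lt_iterate_mem hK hf (n + 1))
  exact ⟨q, fun n => mem_iInter.1 hq n n n.lt_succ_self⟩

end Itinerary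

section Oscillation

/-- Arbitrarily close to `p`, on each of the two sides of `p` in `s`, the map `f` takes values on
each of the two sides of `p`. -/
structure OscillatesAt {α : Type*} [Preorder α] [TopologicalSpace α] (f : α → α) (s : Set α)
    (p : α) : Prop where
  above_right : ∃ᶠ x in 𝓝[s ∩ Ioi p] p, p < f x
  above_left : ∃ᶠ x in 𝓝[s ∩ Iio p] p, p < f x
  below_right : ∃ᶠ x in 𝓝[s ∩ Ioi p] p, f x < p
  below_left : ∃ᶠ x in 𝓝[s ∩ Iio p] p, f x < p

/-- The inductive step in constructing an orbit with prescribed steps: an orbit that visits `K ⊆ V`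
and stays in `T ⊆ V` from then on has a step in the direction `o`, and since `f` maps `K` over `T`,
any continuation inside `T` can be reached from `K`. If `o = .eq`, the orbit has to rest at `p`
forever, so that `T` need not be a neighbourhood of `p`. -/
structure IsLink {α : Type*} [LinearOrder α] [TopologicalSpace α] (f : α → α) (s : Set α) (p : α)
    (o : Ordering) (V K T : Set α) : Prop where
  isCompact : IsCompact K
  nonempty : K.Nonempty
  subset : K ⊆ V ∩ s
  mem_target : p ∈ T
  target_mem_nhds : o ≠ .eq → T ∈ 𝓝 p
  target_subset : T ⊆ V
  surjOn : SurjOn f K T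
  cmp_eq : ∀ x ∈ K, ∀ y ∈ T, cmp x y = o

theorem exists_isLink_of_image_mem_nhds {α : Type*} [LinearOrder α]
    [TopologicalSpace α] {f : α → α} {s V K : Set α} {p : α} {o : Ordering}
    (hV : V ∈ 𝓝 p) (hK : IsCompact K) (hne : K.Nonempty) (hKV : K ⊆ V ∩ s) (himage : f '' K ∈ 𝓝 p)
    (hcmp : ∀ᶠ y in 𝓝 p, ∀ x ∈ K, cmp x y = o) : ∃ T, IsLink f s p o V K T := by
  have hT : V ∩ f '' K ∩ {y | ∀ x ∈ K, cmp x y = o} ∈ 𝓝 p := inter_mem (inter_mem hV himage) hcmp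
  exact ⟨_, hK, hne, hKV, mem_of_mem_nhds hT, fun _ => hT, fun _ hy => hy.1.1,
    fun _ hy => hy.1.2, fun x hx _ hy => hy.2 x hx⟩

theorem eventually_forall_mem_lt_of_isCompact {α : Type*} [LinearOrder α] [TopologicalSpace α]
    [OrderTopology α] {K : Set α} {p : α} (hK : IsCompact K) (hlt : ∀ x ∈ K, x < p) :
    ∀ᶠ y in 𝓝 p, ∀ x ∈ K, x < y := by
  rcases K.eq_empty_or_nonempty with rfl | hne
  · simp
  · obtain ⟨M, hM, hM_max⟩ := hK.exists_isGreatest hne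
    exact (eventually_gt_nhds (hlt M hM)).mono fun y hy x hx => (hM_max hx).trans_lt hy

theorem eventually_forall_mem_gt_of_isCompact {α : Type*} [LinearOrder α] [TopologicalSpace α]
    [OrderTopology α] {K : Set α} {p : α} (hK : IsCompact K) (hgt : ∀ x ∈ K, p < x) :
    ∀ᶠ y in 𝓝 p, ∀ x ∈ K, y < x :=
  eventually_forall_mem_lt_of_isCompact (α := αᵒᵈ) hK hgt

variable {α : Type*} [ConditionallyCompleteLinearOrder α] [TopologicalSpace α] [OrderTopology α]
  [DenselyOrdered α]

theorem exists_isCompact_image_mem_nhds {β : Type*} [LinearOrder β] [TopologicalSpace β]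
    [OrderTopology β] {f : α → β} {s V : Set α} {p : α} {q : β} (hs : s.OrdConnected)
    (hf : ContinuousOn f s) (habove : ∃ᶠ x in 𝓝[s] p, q < f x) (hbelow : ∃ᶠ x in 𝓝[s] p, f x < q)
    (hV : V ∈ 𝓝 p) : ∃ K ⊆ V ∩ s, IsCompact K ∧ K.Nonempty ∧ f '' K ∈ 𝓝 q := by
  have hW : ∀ᶠ x in 𝓝[s] p, x ∈ V.ordConnectedComponent p ∩ s :=
    inter_mem (mem_nhdsWithin_of_mem_nhds (ordConnectedComponent_mem_nhds.2 hV)) self_mem_nhdsWithin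
  have hW_conn : (V.ordConnectedComponent p ∩ s).OrdConnected := .inter inferInstance hs
  obtain ⟨x, hx, hxW⟩ := (habove.and_eventually hW).exists
  obtain ⟨y, hy, hyW⟩ := (hbelow.and_eventually hW).exists
  have hsub : uIcc y x ⊆ V.ordConnectedComponent p ∩ s := hW_conn.uIcc_subset hyW hxW
  refine ⟨uIcc y x, hsub.trans (inter_subset_inter_left s ordConnectedComponent_subset),
    isCompact_uIcc, nonempty_uIcc, mem_of_superset (Icc_mem_nhds hy hx) ?_⟩
  exact Icc_subset_uIcc.trans (intermediate_value_uIcc (hf.mono (hsub.trans inter_subset_right)))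

namespace OscillatesAt

variable {f : α → α} {s : Set α} {p : α}

theorem exists_isLink (h : OscillatesAt f s p) (hs : s.OrdConnected) (hf : ContinuousOn f s)
    (hp : p ∈ s) (hfp : f p = p) {o : Ordering} {V : Set α} (hpV : p ∈ V)
    (hV : o ≠ .eq → V ∈ 𝓝 p) : ∃ K T, IsLink f s p o V K T := by
  cases o with
  | lt =>
    obtain ⟨K, hKV, hK, hne, himage⟩ := exists_isCompact_image_mem_nhds (hs.inter ordConnected_Iio)
      (hf.mono inter_subset_left) h.above_left h.below_left (hV (by simp))
    refine ⟨K, exists_isLink_of_image_mem_nhds (hV (by simp)) hK hne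
      (fun x hx => ⟨(hKV hx).1, (hKV hx).2.1⟩) himage ?_⟩
    exact (eventually_forall_mem_lt_of_isCompact hK fun x hx => (hKV hx).2.2).mono
      fun y hy x hx => (hy x hx).cmp_eq_lt
  | gt =>
    obtain ⟨K, hKV, hK, hne, himage⟩ := exists_isCompact_image_mem_nhds (hs.inter ordConnected_Ioi)
      (hf.mono inter_subset_left) h.above_right h.below_right (hV (by simp))
    refine ⟨K, exists_isLink_of_image_mem_nhds (hV (by simp)) hK hne
      (fun x hx => ⟨(hKV hx).1, (hKV hx).2.1⟩) himage ?_⟩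
    exact (eventually_forall_mem_gt_of_isCompact hK fun x hx => (hKV hx).2.2).mono
      fun y hy x hx => (hy x hx).cmp_eq_gt
  | eq =>
    exact ⟨{p}, {p}, isCompact_singleton, singleton_nonempty p, by simp [hpV, hp], rfl, by simp,
      by simpa using hpV, by simp [SurjOn, hfp], by simp⟩

theorem exists_hasTailOrder (h : OscillatesAt f s p) (hs : s.OrdConnected) (hf : ContinuousOn f s)
    (hp : p ∈ s) (hfp : f p = p) {o : ℕ → Ordering} (ho : ∀ n, o n = .eq → o (n + 1) = .eq) :
    ∃ q ∈ s, HasTailOrder (fun n => f^[n] q) o := by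
  have hlink : ∀ n V, (p ∈ V ∧ (o n ≠ .eq → V ∈ 𝓝 p)) → ∃ K T, IsLink f s p (o n) V K T :=
    fun n V hV => h.exists_isLink hs hf hp hfp hV.1 hV.2
  choose! K T hKT using hlink
  let V : ℕ → Set α := Nat.rec univ T
  have hV : ∀ n, p ∈ V n ∧ (o n ≠ .eq → V n ∈ 𝓝 p) := by
    intro n
    induction n with
    | zero => exact ⟨mem_univ p, fun _ => univ_mem⟩
    | succ n ih => exact ⟨(hKT n _ ih).mem_target,
        fun hne => (hKT n _ ih).target_mem_nhds (mt (ho n) hne)⟩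
  have hchain : ∀ n, IsLink f s p (o n) (V n) (K n (V n)) (V (n + 1)) := fun n => hKT n _ (hV n)
  have hV_anti : Antitone V := antitone_nat_of_succ_le fun n => (hchain n).target_subset
  have hKV : ∀ n, K n (V n) ⊆ V n := fun n => (hchain n).subset.trans inter_subset_left
  have hKs : ∀ n, K n (V n) ⊆ s := fun n => (hchain n).subset.trans inter_subset_right
  obtain ⟨q, hq⟩ := exists_forall_iterate_mem (hchain 0).isCompact
    (fun n => (hchain n).isCompact.isClosed) (fun n => (hchain n).nonempty)
    (fun n => hf.mono (hKs n)) (fun n => (hchain n).surjOn.mono subset_rfl (hKV (n + 1)))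
  exact ⟨q, hKs 0 (hq 0), fun m n hmn =>
    (hchain m).cmp_eq _ (hq m) _ (hV_anti hmn (hKV n (hq n)))⟩

end OscillatesAt

theorem OscillatesAt.isUniversalF1 {a b : ℝ} {f : ℝ → ℝ} {p : ℝ}
    (h : OscillatesAt f (Icc a b) p) (hf : ContinuousOn f (Icc a b)) (hp : p ∈ Icc a b)
    (hfp : f p = p) : IsUniversalF1 a b f := by
  intro c d _ g hg hmaps hno2 x hx
  have hgF1 : MemF1 c d g := ⟨hg, hmaps, hno2⟩
  have hrest : ∀ n, cmp (g^[n] x) (g^[n + 1] x) = .eq → cmp (g^[n + 1] x) (g^[n + 2] x) = .eq := by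
    intro n hn
    rw [cmp_eq_eq_iff] at hn ⊢
    rw [iterate_succ_apply' g (n + 1), ← hn, ← iterate_succ_apply' g, ← hn]
  obtain ⟨q, hq, hord⟩ := h.exists_hasTailOrder ordConnected_Icc hf hp hfp hrest
  exact ⟨q, hq, (hgF1.hasTailOrder_iterate hx).lt_iff_lt hord⟩

end Oscillation

/-! ### Oscillation along a sequence -/

theorem exists_tendsto_forall_iff_of_periodic {ι : Type*} {l : Filter ι} [l.IsCountablyGenerated]
    {P : ℕ → ι → Prop} {k : ℕ} (hP : Function.Periodic P k) (hk : 0 < k) :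
    (∃ u : ℕ → ι, Tendsto u atTop l ∧ ∀ n, P n (u n)) ↔ ∀ i, ∃ᶠ x in l, P i x := by
  constructor
  · rintro ⟨u, hu, hPu⟩ i
    refine hu.frequently ((Nat.frequently_mod_eq (Nat.mod_lt i hk)).mono fun n hn => ?_)
    rw [← hP.map_mod_nat i, ← hn, hP.map_mod_nat]
    exact hPu n
  · intro h
    choose v hv hPv using fun i => exists_seq_forall_of_frequently (h i)
    refine ⟨fun n => v (n % k) n, fun U hU => ?_, fun n => ?_⟩
    · have hall : ∀ᶠ n in atTop, ∀ i ∈ Finset.range k, v i n ∈ U :=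
        (eventually_all_finset _).2 fun i _ => hv i hU
      exact hall.mono fun n hn => hn _ (Finset.mem_range.2 (Nat.mod_lt n hk))
    · rw [← hP.map_mod_nat n]
      exact hPv _ n

theorem oscillatesAt_iff_exists_seq {α : Type*} [Preorder α] [TopologicalSpace α]
    [FirstCountableTopology α] {f : α → α} {s : Set α} {p : α} :
    OscillatesAt f s p ↔ ∃ u : ℕ → α, (∀ n, u n ∈ s) ∧ Tendsto u atTop (𝓝 p) ∧
      (∀ n, Even n → p < u n) ∧ (∀ n, Odd n → u n < p) ∧
      (∀ n, n % 4 = 0 ∨ n % 4 = 1 → p < f (u n)) ∧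
      (∀ n, n % 4 = 2 ∨ n % 4 = 3 → f (u n) < p) := by
  let P : ℕ → α → Prop := fun n x => x ∈ s ∧ (Even n → p < x) ∧ (Odd n → x < p) ∧
    (n % 4 = 0 ∨ n % 4 = 1 → p < f x) ∧ (n % 4 = 2 ∨ n % 4 = 3 → f x < p)
  have hP : Function.Periodic P 4 := by
    intro n
    simp [P, Nat.even_iff, Nat.odd_iff, Nat.add_mod_right, show (n + 4) % 2 = n % 2 by omega]
  trans ∀ i, ∃ᶠ x in 𝓝 p, P i x
  · constructor
    · intro h i
      rw [← hP.map_mod_nat i]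
      have hi : i % 4 < 4 := Nat.mod_lt i four_pos
      interval_cases i % 4
      · exact (frequently_nhdsWithin_iff.1 h.above_right).mono (by simp +contextual [P])
      · exact (frequently_nhdsWithin_iff.1 h.above_left).mono (by simp +contextual [P])
      · exact (frequently_nhdsWithin_iff.1 h.below_right).mono (by simp +contextual [P])
      · exact (frequently_nhdsWithin_iff.1 h.below_left).mono
          (by simp +contextual [P, Nat.odd_iff])
    · intro h
      constructor <;> rw [frequently_nhdsWithin_iff]
      · exact (h 0).mono (by simp +contextual [P])
      · exact (h 1).mono (by simp +contextual [P])
      · exact (h 2).mono (by simp +contextual [P])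
      · exact (h 3).mono (by simp +contextual [P, Nat.odd_iff])
  · rw [← exists_tendsto_forall_iff_of_periodic hP four_pos]
    simp only [P, forall_and]
    exact exists_congr fun u => and_left_comm

/-! ### The oscillation of a universal map -/

section SpiralOrbit

/-- A sequence with the order pattern of a spiral towards its limit point: the signs of the
successive terms relative to that point are `+`, `+`, `-`, `-`, repeating with period `4`. -/
def IsSpiral {α : Type*} [LinearOrder α] (x : ℕ → α) : Prop :=
  HasTailOrder x fun n => if n % 4 < 2 then .gt else .lt

namespace IsSpiral

section LinearOrder

variable {α : Type*} [LinearOrder α] {x : ℕ → α} {m n : ℕ}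

theorem lt_of_mod_lt (h : IsSpiral x) (hm : m % 4 < 2) (hmn : m < n) : x n < x m :=
  (cmp_eq_gt_iff _ _).1 ((h hmn).trans (if_pos hm))

theorem lt_of_le_mod (h : IsSpiral x) (hm : 2 ≤ m % 4) (hmn : m < n) : x m < x n :=
  (cmp_eq_lt_iff _ _).1 ((h hmn).trans (if_neg hm.not_gt))

variable [TopologicalSpace α] [OrderClosedTopology α] {p : α}

theorem limit_lt (h : IsSpiral x) (hlim : Tendsto (fun k => x (4 * k)) atTop (𝓝 p))
    (hn : n % 4 < 2) : p < x n := by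
  have hle : p ≤ x (n + 4) := le_of_tendsto hlim <| (eventually_gt_atTop (n + 4)).mono
    fun k hk => (h.lt_of_mod_lt (by omega) (by omega)).le
  exact hle.trans_lt (h.lt_of_mod_lt hn (by omega))

theorem lt_limit (h : IsSpiral x) (hlim : Tendsto (fun k => x (4 * k)) atTop (𝓝 p))
    (hn : 2 ≤ n % 4) : x n < p := by
  have hle : x (n + 4) ≤ p := ge_of_tendsto hlim <| (eventually_gt_atTop (n + 4)).mono
    fun k hk => (h.lt_of_le_mod (by omega) (by omega)).le
  exact (h.lt_of_le_mod hn (by omega)).trans_le hle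

end LinearOrder

variable {α : Type*} [ConditionallyCompleteLinearOrder α] [TopologicalSpace α] [OrderTopology α]

theorem exists_tendsto {x : ℕ → α} (h : IsSpiral x) (hx : BddBelow (range x)) :
    ∃ p, Tendsto (fun k => x (4 * k)) atTop (𝓝 p) ∧
      Tendsto (fun k => x (4 * k + 1)) atTop (𝓝 p) := by
  have hanti : Antitone fun k => x (4 * k) :=
    antitone_nat_of_succ_le fun k => (h.lt_of_mod_lt (by omega) (by omega)).le
  have hlim := tendsto_atTop_ciInf hanti (hx.mono (range_comp_subset_range _ x))
  refine ⟨_, hlim, tendsto_of_tendsto_of_tendsto_of_le_of_le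
    (hlim.comp (tendsto_add_atTop_nat 1)) hlim (fun k => ?_) (fun k => ?_)⟩
  · exact (h.lt_of_mod_lt (m := 4 * k + 1) (n := 4 * (k + 1)) (by omega) (by omega)).le
  · exact (h.lt_of_mod_lt (by omega) (by omega)).le

theorem exists_oscillatesAt {a b q : α} {f : α → α} (hf : ContinuousOn f (Icc a b))
    (hmaps : MapsTo f (Icc a b) (Icc a b)) (hq : q ∈ Icc a b) (h : IsSpiral fun n => f^[n] q) :
    ∃ p ∈ Icc a b, f p = p ∧ OscillatesAt f (Icc a b) p := by
  have hmem : ∀ n, f^[n] q ∈ Icc a b := fun n => hmaps.iterate n hq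
  obtain ⟨p, hlim₀, hlim₁⟩ := h.exists_tendsto ⟨a, forall_mem_range.2 fun n => (hmem n).1⟩
  have hp : p ∈ Icc a b := isClosed_Icc.mem_of_tendsto hlim₀ (.of_forall fun k => hmem (4 * k))
  have hstep : ∀ i, Tendsto (fun k => f^[4 * k + i] q) atTop (𝓝 p) →
      Tendsto (fun k => f^[4 * k + (i + 1)] q) atTop (𝓝 (f p)) := by
    intro i hi
    simp only [← add_assoc, iterate_succ_apply']
    exact (hf p hp).tendsto.comp (tendsto_nhdsWithin_iff.2 ⟨hi, .of_forall fun k => hmem _⟩)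
  have hfp : f p = p := tendsto_nhds_unique (hstep 0 hlim₀) hlim₁
  have hlim : ∀ i, Tendsto (fun k => f^[4 * k + i] q) atTop (𝓝 p) := by
    intro i
    induction i with
    | zero => exact hlim₀
    | succ i ih => exact hfp ▸ hstep i ih
  have hright : ∀ n, n % 4 < 2 → p < f^[n] q := fun n => h.limit_lt hlim₀
  have hleft : ∀ n, 2 ≤ n % 4 → f^[n] q < p := fun n => h.lt_limit hlim₀
  have hfreq : ∀ (i : ℕ) (side : Set α) (P : α → Prop), (∀ k, f^[4 * k + i] q ∈ side) →
      (∀ k, P (f^[4 * k + i + 1] q)) → ∃ᶠ x in 𝓝[Icc a b ∩ side] p, P (f x) := by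
    intro i side P hside hP
    have hlim_side : Tendsto (fun k => f^[4 * k + i] q) atTop (𝓝[Icc a b ∩ side] p) :=
      tendsto_nhdsWithin_iff.2 ⟨hlim i, .of_forall fun k => ⟨hmem _, hside k⟩⟩
    refine hlim_side.frequently (.of_forall fun k => ?_)
    rw [← iterate_succ_apply' f]
    exact hP k
  refine ⟨p, hp, hfp, ?_, ?_, ?_, ?_⟩
  · exact hfreq 0 (Ioi p) (p < ·) (fun _ => hright _ (by omega))
      (fun _ => hright _ (by omega))
  · exact hfreq 3 (Iio p) (p < ·) (fun _ => hleft _ (by omega))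
      (fun _ => hright _ (by omega))
  · exact hfreq 1 (Ioi p) (· < p) (fun _ => hright _ (by omega))
      (fun _ => hleft _ (by omega))
  · exact hfreq 2 (Iio p) (· < p) (fun _ => hleft _ (by omega))
      (fun _ => hleft _ (by omega))

end IsSpiral

end SpiralOrbit

/-- A map in the first Sharkovsky class whose orbit of `1` spirals towards `0`. The value at `0` is
`0`, whatever the value `Real.logb 2 0` is. -/
noncomputable def spiralMap (x : ℝ) : ℝ :=
  x / 2 * Real.cos (Real.pi * Real.logb 2 |x|)

theorem abs_spiralMap_le (x : ℝ) : |spiralMap x| ≤ |x| / 2 := by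
  rw [spiralMap, abs_mul, abs_div, abs_two]
  exact mul_le_of_le_one_right (by positivity) (Real.abs_cos_le_one _)

theorem continuous_spiralMap : Continuous spiralMap := by
  rw [continuous_iff_continuousAt]
  intro x
  rcases eq_or_ne x 0 with rfl | hx
  · have hzero : spiralMap 0 = 0 := by simp [spiralMap]
    rw [ContinuousAt, hzero]
    refine squeeze_zero_norm abs_spiralMap_le ?_
    exact Continuous.tendsto' (by fun_prop) 0 0 (by simp)
  · have hx' : |x| ≠ 0 := abs_ne_zero.2 hx
    unfold spiralMap Real.logb
    fun_prop (disch := assumption)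

theorem memF1_spiralMap : MemF1 (-1) 1 spiralMap where
  continuousOn := continuous_spiralMap.continuousOn
  mapsTo x hx := by
    have hx' : |x| ≤ 1 := abs_le.2 hx
    exact abs_le.1 (by linarith [abs_spiralMap_le x])
  no_two_cycle := by
    rintro ⟨x, _, y, _, hxy, rfl, hx⟩
    have hback := abs_spiralMap_le (spiralMap x)
    rw [hx] at hback
    have hx₀ : x = 0 := abs_nonpos_iff.1 (by linarith [abs_spiralMap_le x, abs_nonneg x])
    simp [hx₀, spiralMap] at hxy

theorem spiralMap_mul_pow {s : ℝ} (hs : |s| = 1) (m : ℕ) :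
    spiralMap (s * (1 / 2) ^ m) = (-1) ^ m * s * (1 / 2) ^ (m + 1) := by
  have hlog : Real.pi * Real.logb 2 |s * (1 / 2) ^ m| = -(m * Real.pi) := by
    rw [abs_mul, hs, one_mul, abs_of_pos (by positivity), Real.logb_pow]
    simp [mul_comm]
  rw [spiralMap, hlog, Real.cos_neg, Real.cos_nat_mul_pi]
  ring

theorem iterate_spiralMap_one (n : ℕ) : spiralMap^[n] 1 = (-1) ^ (n / 2) * (1 / 2) ^ n := by
  induction n with
  | zero => simp
  | succ n ih =>
    have hsign : (-1 : ℝ) ^ (n + n / 2) = (-1) ^ ((n + 1) / 2) :=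
      neg_one_pow_congr (by grind)
    rw [iterate_succ_apply', ih, spiralMap_mul_pow (by simp), ← pow_add, hsign]

theorem isSpiral_iterate_spiralMap_one : IsSpiral fun n => spiralMap^[n] 1 := by
  intro m n hmn
  have hpow : ((1 : ℝ) / 2) ^ n < (1 / 2) ^ m :=
    pow_lt_pow_right_of_lt_one₀ (by norm_num) (by norm_num) hmn
  have habs : |spiralMap^[n] 1| < (1 / 2) ^ m := by
    simpa [iterate_spiralMap_one, abs_mul] using hpow
  obtain ⟨hlow, hup⟩ := abs_lt.1 habs
  dsimp only
  rw [iterate_spiralMap_one m]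
  split_ifs with hm
  · rw [cmp_eq_gt_iff, Even.neg_one_pow (by rw [Nat.even_iff]; omega), one_mul]
    exact hup
  · rw [cmp_eq_lt_iff, Odd.neg_one_pow (by rw [Nat.odd_iff]; omega), neg_one_mul]
    exact hlow

theorem IsUniversalF1.exists_oscillatesAt {a b : ℝ} {f : ℝ → ℝ} (h : IsUniversalF1 a b f)
    (hf : ContinuousOn f (Icc a b)) (hmaps : MapsTo f (Icc a b) (Icc a b)) :
    ∃ p ∈ Icc a b, f p = p ∧ OscillatesAt f (Icc a b) p := by
  obtain ⟨q, hq, hpattern⟩ := h (-1) 1 (by norm_num) spiralMap memF1_spiralMap.continuousOn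
    memF1_spiralMap.mapsTo memF1_spiralMap.no_two_cycle 1 (by norm_num)
  have hspiral : IsSpiral fun n => f^[n] q := isSpiral_iterate_spiralMap_one.congr hpattern
  exact hspiral.exists_oscillatesAt hf hmaps hq

theorem stmt_15_general (a b : ℝ) (f : ℝ → ℝ) (hf : ContinuousOn f (Icc a b))
    (hmaps : MapsTo f (Icc a b) (Icc a b)) :
    IsUniversalF1 a b f ↔
    ∃ p ∈ Icc a b, f p = p ∧
      ∃ u : ℕ → ℝ, (∀ n, u n ∈ Icc a b) ∧
        Tendsto u atTop (𝓝 p) ∧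
        (∀ n, Even n → p < u n) ∧
        (∀ n, Odd n → u n < p) ∧
        (∀ n, n % 4 = 0 ∨ n % 4 = 1 → p < f (u n)) ∧
        (∀ n, n % 4 = 2 ∨ n % 4 = 3 → f (u n) < p) := by
  simp only [← oscillatesAt_iff_exists_seq]
  exact ⟨fun h => h.exists_oscillatesAt hf hmaps,
    fun ⟨_, hp, hfp, hosc⟩ => hosc.isUniversalF1 hf hp hfp⟩

/-- Characterization of universal maps in the first Sharkovsky class via a sequence
oscillating around a fixed point with prescribed signs of its images. -/
theorem stmt_15 (a b : ℝ) (hab : a ≤ b) (f : ℝ → ℝ)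
    (hf : ContinuousOn f (Set.Icc a b))
    (hmaps : Set.MapsTo f (Set.Icc a b) (Set.Icc a b))
    (hno2 : ¬ ∃ x ∈ Set.Icc a b, ∃ y ∈ Set.Icc a b, x ≠ y ∧ f x = y ∧ f y = x) :
    IsUniversalF1 a b f ↔
    ∃ p ∈ Set.Icc a b, f p = p ∧
      ∃ u : ℕ → ℝ, (∀ n, u n ∈ Set.Icc a b) ∧
        Filter.Tendsto u Filter.atTop (nhds p) ∧
        (∀ n, Even n → p < u n) ∧
        (∀ n, Odd n → u n < p) ∧
        (∀ n, n % 4 = 0 ∨ n % 4 = 1 → p < f (u n)) ∧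
        (∀ n, n % 4 = 2 ∨ n % 4 = 3 → f (u n) < p) :=
  stmt_15_general a b f hf hmaps
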